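/- A small category 𝒞 with pairwise coproducts is contractible, i.e., its classifying space B𝒞 is a contractible topological space. Dually, a small category with pairwise products is contractible. -/

import Mathlib

open CategoryTheory CategoryTheory.Limits

/-!
Fix an object `c`. The coprojections are natural transformations from the identity functor and from
the constant functor `c` to `c ⨿ -`, so it suffices that natural transformations realize to
homotopies. A natural transformation gives a simplicial homotopy `nerve C ⊗ Δ[1] ⟶ nerve D`, and the
issue is that realization commutes with the product by `Δ[1]`. This reduces to the comparison map
`|Δ[m] ⊗ Δ[n]| → |Δ[m]| × |Δ[n]|`, which goes from a compact space to a Hausdorff one. A point of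
the source amounts to a probability measure supported on a chain of `{0, …, m} × {0, …, n}`, a point
of the target to a pair of marginals. The joint distribution function of a measure on a chain is the
minimum of those of its marginals, whence injectivity; the north-west corner rule of optimal
transport constructs a measure on a chain with given marginals, whence surjectivity.
-/

section

open MonoidalCategory Opposite Simplicial

universe u v

section StdSimplex

variable {S α β : Type*} [Semiring S] [PartialOrder S] [IsOrderedRing S] [Fintype α] [Fintype β]

theorem stdSimplex_map_apply [DecidableEq β] (f : α → β) (p : stdSimplex S α) (b : β) :
    stdSimplex.map f p b = ∑ a with f a = b, p a := by
  simp [FunOnFinite.linearMap_apply_apply]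

theorem stdSimplex_map_apply_of_injective {f : α → β} (hf : f.Injective) (p : stdSimplex S α)
    (a : α) : stdSimplex.map f p (f a) = p a := by
  classical
  rw [stdSimplex_map_apply, Finset.sum_eq_single a] <;> simp +contextual [hf.eq_iff]

theorem stdSimplex_map_injective {f : α → β} (hf : f.Injective) :
    (stdSimplex.map (S := S) f).Injective := by
  intro p q h
  ext a
  rw [← stdSimplex_map_apply_of_injective hf p, h, stdSimplex_map_apply_of_injective hf]

theorem stdSimplex_map_ne_zero_iff {f : α → β} {p : stdSimplex S α} (hp : ∀ a, p a ≠ 0) {b : β} :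
    stdSimplex.map f p b ≠ 0 ↔ b ∈ Set.range f := by
  classical
  rw [stdSimplex_map_apply, Ne, Finset.sum_eq_zero_iff_of_nonneg fun a _ ↦ stdSimplex.zero_le p a]
  simp [hp]

theorem sum_stdSimplex_map [DecidableEq β] (f : α → β) (p : stdSimplex S α) (s : Finset β) :
    ∑ b ∈ s, stdSimplex.map f p b = ∑ a with f a ∈ s, p a := by
  simp_rw [stdSimplex_map_apply, Finset.sum_fiberwise_eq_sum_filter]

theorem exists_stdSimplex_map_succAbove_eq {n : ℕ} {p : stdSimplex S (Fin (n + 1))}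
    {i : Fin (n + 1)} (hi : p i = 0) :
    ∃ q : stdSimplex S (Fin n), stdSimplex.map i.succAbove q = p := by
  have hsum : ∑ j, p (i.succAbove j) = 1 := by
    rw [← stdSimplex.sum_eq_one p, Fin.sum_univ_succAbove _ i, hi, zero_add]
  refine ⟨⟨fun j ↦ p (i.succAbove j), fun j ↦ stdSimplex.zero_le p _, hsum⟩, ?_⟩
  ext j
  obtain rfl | ⟨j, rfl⟩ := i.eq_self_or_eq_succAbove j
  · simp [stdSimplex_map_apply, hi, Fin.succAbove_ne]
  · exact stdSimplex_map_apply_of_injective i.succAbove_right_injective _ _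

theorem stdSimplex_map_const [DecidableEq β] (b : β) (p : stdSimplex S α) :
    stdSimplex.map (fun _ ↦ b) p = stdSimplex.vertex b := by
  ext c
  obtain rfl | hbc := eq_or_ne b c
  · simp [stdSimplex_map_apply, stdSimplex.sum_eq_one]
  · simp [stdSimplex_map_apply, hbc]

end StdSimplex

/-- The point of the realization `|X|` with barycentric coordinates `p` in the simplex `x`. -/
noncomputable def simplexPoint {X : SSet.{u}} {n : ℕ} (x : X _⦋n⦌)
    (p : stdSimplex ℝ (Fin (n + 1))) : |X| :=
  SSet.toTop.map (SSet.yonedaEquiv.symm x) (⦋n⦌.toTopHomeo.symm p)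

section SimplexPoint

variable {X Y : SSet.{u}}

theorem continuous_simplexPoint {n : ℕ} (x : X _⦋n⦌) : Continuous (simplexPoint x) := by
  unfold simplexPoint
  fun_prop

theorem simplexPoint_map {m n : ℕ} (θ : ⦋m⦌ ⟶ ⦋n⦌) (x : X _⦋n⦌)
    (p : stdSimplex ℝ (Fin (m + 1))) :
    simplexPoint (X.map θ.op x) p = simplexPoint x (stdSimplex.map θ p) := by
  have h : SSet.toTop.map (SSet.yonedaEquiv.symm (X.map θ.op x)) =
      SSet.toTop.map (SSet.stdSimplex.map θ) ≫ SSet.toTop.map (SSet.yonedaEquiv.symm x) := by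
    rw [← Functor.map_comp, SSet.yonedaEquiv_symm_naturality_left]
  refine (ConcreteCategory.congr_hom h _).trans (congrArg (SSet.toTop.map _) ?_)
  exact (SimplexCategory.toTopHomeo_symm_naturality_apply θ p).symm

theorem toTop_map_simplexPoint (f : X ⟶ Y) {n : ℕ} (x : X _⦋n⦌)
    (p : stdSimplex ℝ (Fin (n + 1))) :
    SSet.toTop.map f (simplexPoint x p) = simplexPoint (f.app _ x) p := by
  simp [simplexPoint, ← SSet.yonedaEquiv_symm_comp]

theorem toSSetObjEquiv_homEquiv_apply {Z : TopCat.{u}} (f : |X| ⟶ Z) {n : ℕ} (x : X _⦋n⦌)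
    (p : stdSimplex ℝ (Fin (n + 1))) :
    TopCat.toSSetObjEquiv Z _ ((sSetTopAdj.homEquiv X Z f).app _ x) p = f (simplexPoint x p) := by
  have h := sSetTopAdj_unit_app_app_down X _ x
  rw [Adjunction.homEquiv_unit]
  exact congrArg f (ConcreteCategory.congr_hom h (ULift.up p))

theorem toTop_hom_ext {Z : TopCat.{u}} {f g : |X| ⟶ Z}
    (h : ∀ (n : ℕ) (x : X _⦋n⦌) (p : stdSimplex ℝ (Fin (n + 1))),
      f (simplexPoint x p) = g (simplexPoint x p)) : f = g := by
  refine (sSetTopAdj.homEquiv X Z).injective ?_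
  ext ⟨n⟩ x
  refine (TopCat.toSSetObjEquiv Z _).injective (ContinuousMap.ext fun p ↦ ?_)
  exact (toSSetObjEquiv_homEquiv_apply f x p).trans
    ((h _ x p).trans (toSSetObjEquiv_homEquiv_apply g x p).symm)

theorem exists_simplexPoint_eq (z : |X|) :
    ∃ (n : ℕ) (x : X _⦋n⦌) (p : stdSimplex ℝ (Fin (n + 1))), simplexPoint x p = z := by
  -- Every predicate is continuous for the indiscrete topology on `Prop`, so the predicate
  -- of being a point of some simplex can be compared with `True` on the points of simplices.
  let _ : TopologicalSpace Prop := ⊤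
  let χ (φ : |X| → Prop) : |X| ⟶ TopCat.of (ULift Prop) :=
    TopCat.ofHom ⟨fun w ↦ ⟨φ w⟩, continuous_uliftUp.comp continuous_top⟩
  have h : χ (fun w ↦ ∃ n x p, simplexPoint (n := n) x p = w) = χ fun _ ↦ True :=
    toTop_hom_ext fun n x p ↦ congrArg ULift.up (eq_true ⟨n, x, p, rfl⟩)
  exact of_eq_true (congrArg ULift.down (ConcreteCategory.congr_hom h z))

theorem exists_nonDegenerate_simplexPoint_eq (z : |X|) :
    ∃ (n : ℕ) (x : X.nonDegenerate n) (p : stdSimplex ℝ (Fin (n + 1))),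
      (∀ i, p i ≠ 0) ∧ simplexPoint x.1 p = z := by
  obtain ⟨n, x, p, rfl⟩ := exists_simplexPoint_eq z
  induction n using Nat.strong_induction_on with
  | _ n ih =>
    by_cases hx : x ∈ X.degenerate n
    · obtain ⟨m, hm, θ, y, rfl⟩ := hx
      rw [simplexPoint_map]
      exact ih m hm y _
    by_cases hp : ∀ i, p i ≠ 0
    · exact ⟨n, ⟨x, hx⟩, p, hp, rfl⟩
    push Not at hp
    obtain ⟨i, hi⟩ := hp
    obtain ⟨q, rfl⟩ := exists_stdSimplex_map_succAbove_eq hi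
    cases n with
    | zero => simpa using stdSimplex.sum_eq_one q
    | succ n =>
      have := ih n n.lt_succ_self (X.δ i x) q
      rwa [SimplicialObject.δ, simplexPoint_map] at this

instance compactSpace_toTop_obj [X.Finite] : CompactSpace |X| := by
  have : (⋃ x : X.N, Set.range (simplexPoint x.simplex)) = Set.univ := by
    refine Set.eq_univ_of_forall fun z ↦ ?_
    obtain ⟨n, x, p, -, rfl⟩ := exists_nonDegenerate_simplexPoint_eq z
    exact Set.mem_iUnion.2 ⟨SSet.N.mk x.1 x.2, p, rfl⟩
  rw [← isCompact_univ_iff, ← this]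
  exact isCompact_iUnion fun x ↦ isCompact_range (continuous_simplexPoint _)

theorem toTopHomeo_simplexPoint {m n : ℕ} (x : (Δ[m] : SSet.{u}) _⦋n⦌)
    (p : stdSimplex ℝ (Fin (n + 1))) :
    ⦋m⦌.toTopHomeo (simplexPoint x p) = stdSimplex.map x p := by
  have h : SSet.yonedaEquiv.symm x = SSet.stdSimplex.map (SSet.stdSimplex.objEquiv x) := by
    rw [Equiv.symm_apply_eq, SSet.yonedaEquiv_map, Equiv.symm_apply_apply]
  rw [simplexPoint, h]
  refine (SimplexCategory.toTopHomeo_naturality_apply _ _).trans ?_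
  rw [Homeomorph.apply_symm_apply]
  rfl

end SimplexPoint

section Chain

theorem sum_filter_and_eq_min {ι M : Type*} [LinearOrder ι] [Fintype ι] [AddCommMonoid M]
    [LinearOrder M] [IsOrderedAddMonoid M] {p : ι → M} (hp : ∀ i, 0 ≤ p i) {s t : Set ι}
    [DecidablePred (· ∈ s)] [DecidablePred (· ∈ t)] (hs : IsLowerSet s) (ht : IsLowerSet t) :
    ∑ i with i ∈ s ∧ i ∈ t, p i = min (∑ i with i ∈ s, p i) (∑ i with i ∈ t, p i) := by
  wlog hst : s ⊆ t generalizing s t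
  · simpa only [and_comm, min_comm] using this ht hs ((hs.total ht).resolve_left hst)
  have hle : ∑ i with i ∈ s, p i ≤ ∑ i with i ∈ t, p i :=
    Finset.sum_le_sum_of_subset_of_nonneg (Finset.monotone_filter_right _ fun i _ ↦ @hst i)
      fun i _ _ ↦ hp i
  rw [min_eq_left hle]
  exact Finset.sum_congr (Finset.filter_congr fun i _ ↦ and_iff_left_of_imp (@hst i)) fun _ _ ↦ rfl

theorem eq_of_forall_sum_le_eq {P M : Type*} [PartialOrder P] [Fintype P] [DecidableLE P]
    [AddCancelCommMonoid M] {f g : P → M}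
    (h : ∀ x, ∑ y with y ≤ x, f y = ∑ y with y ≤ x, g y) : f = g := by
  classical
  funext x
  induction x using WellFoundedLT.induction with
  | ind x ih =>
    have split (f : P → M) : ∑ y with y ≤ x, f y = f x + ∑ y with y < x, f y := by
      rw [← Finset.sum_insert (by simp)]
      exact Finset.sum_congr (by ext; simp [le_iff_eq_or_lt]) fun _ _ ↦ rfl
    have hx := h x
    rw [split, split, Finset.sum_congr rfl (g := g) (by simpa using ih)] at hx
    exact add_right_cancel hx

variable {ι κ P Q : Type*} [LinearOrder ι] [Fintype ι] [LinearOrder κ] [Fintype κ]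
  [PartialOrder P] [Fintype P] [PartialOrder Q] [Fintype Q]

open Classical in
theorem sum_le_stdSimplex_map_eq_min (f : ι →o P × Q) (p : stdSimplex ℝ ι) (x : P × Q) :
    ∑ y with y ≤ x, stdSimplex.map f p y =
      min (∑ y with y ≤ x.1, stdSimplex.map (fun i ↦ (f i).1) p y)
        (∑ y with y ≤ x.2, stdSimplex.map (fun i ↦ (f i).2) p y) := by
  simp only [sum_stdSimplex_map, Finset.mem_filter, Finset.mem_univ, true_and]
  exact sum_filter_and_eq_min (stdSimplex.zero_le p)
    (s := {i | (f i).1 ≤ x.1}) (t := {i | (f i).2 ≤ x.2})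
    (fun i j hij hi ↦ (f.monotone hij).1.trans hi) fun i j hij hi ↦ (f.monotone hij).2.trans hi

theorem stdSimplex_map_eq_of_map_fst_eq_of_map_snd_eq {f : ι →o P × Q} {g : κ →o P × Q}
    {p : stdSimplex ℝ ι} {q : stdSimplex ℝ κ}
    (h₁ : stdSimplex.map (fun i ↦ (f i).1) p = stdSimplex.map (fun i ↦ (g i).1) q)
    (h₂ : stdSimplex.map (fun i ↦ (f i).2) p = stdSimplex.map (fun i ↦ (g i).2) q) :
    stdSimplex.map f p = stdSimplex.map g q := by
  classical
  refine stdSimplex.ext (eq_of_forall_sum_le_eq fun x ↦ ?_)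
  rw [sum_le_stdSimplex_map_eq_min, sum_le_stdSimplex_map_eq_min, h₁, h₂]

end Chain

section Coupling

/-- The finite measures `a` and `b` are the marginals of a measure supported on a chain of
`Fin m × Fin n`, encoded as the image of weights `p` under a weakly monotone map from a nonempty
finite linear order. -/
def HasChainCoupling {m n : ℕ} (a : Fin m → ℝ) (b : Fin n → ℝ) : Prop :=
  ∃ (k : ℕ) (f : Fin (k + 1) →o Fin m × Fin n) (p : Fin (k + 1) → ℝ), (∀ i, 0 ≤ p i) ∧
    (∀ u, ∑ i with (f i).1 = u, p i = a u) ∧ ∀ v, ∑ i with (f i).2 = v, p i = b v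

namespace HasChainCoupling

variable {m n : ℕ}

theorem symm {a : Fin m → ℝ} {b : Fin n → ℝ} (h : HasChainCoupling a b) :
    HasChainCoupling b a := by
  obtain ⟨k, f, p, hp, hfst, hsnd⟩ := h
  exact ⟨k, (OrderHom.snd.prod OrderHom.fst).comp f, p, hp, hsnd, hfst⟩

theorem of_fin_one {a : Fin 1 → ℝ} {b : Fin (n + 1) → ℝ} (hb : ∀ v, 0 ≤ b v)
    (hab : ∑ u, a u = ∑ v, b v) : HasChainCoupling a b :=
  ⟨n, (OrderHom.const _ 0).prod OrderHom.id, b, hb, fun u ↦ by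
    simpa [Subsingleton.elim u 0] using hab.symm, fun v ↦ by simp [Finset.filter_eq']⟩

theorem snoc {a : Fin (m + 1) → ℝ} {b : Fin (n + 1) → ℝ} (ha : 0 ≤ a (Fin.last m))
    (h : HasChainCoupling (a ∘ Fin.castSucc) (b - Pi.single (Fin.last n) (a (Fin.last m)))) :
    HasChainCoupling a b := by
  obtain ⟨k, f, p, hp, hfst, hsnd⟩ := h
  let g : Fin (k + 2) → Fin (m + 1) × Fin (n + 1) :=
    Fin.snoc (fun i ↦ ((f i).1.castSucc, (f i).2)) (Fin.last m, Fin.last n)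
  have hg : Monotone g := by
    intro i j hij
    cases j using Fin.lastCases with
    | last => simpa [g] using ⟨Fin.le_last _, Fin.le_last _⟩
    | cast j =>
      cases i using Fin.lastCases with
      | last => simp at hij
      | cast i => simpa [g] using Prod.mk_le_mk.1 (f.monotone (Fin.castSucc_le_castSucc_iff.1 hij))
  refine ⟨k + 1, ⟨g, hg⟩, Fin.snoc p (a (Fin.last m)), fun i ↦ ?_, fun u ↦ ?_, fun v ↦ ?_⟩
  · cases i using Fin.lastCases <;> simp [ha, hp]
  · rw [Finset.sum_filter, Fin.sum_univ_castSucc]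
    cases u using Fin.lastCases with
    | last => simp [g]
    | cast u => simpa [g, Finset.sum_filter, (Fin.castSucc_ne_last u).symm] using hfst u
  · have := hsnd v
    rw [Pi.sub_apply, eq_sub_iff_add_eq, Pi.single_apply, Finset.sum_filter] at this
    simpa [g, Finset.sum_filter, Fin.sum_univ_castSucc, eq_comm] using this

theorem of_sum_eq {a : Fin (m + 1) → ℝ} {b : Fin (n + 1) → ℝ} (ha : ∀ u, 0 ≤ a u)
    (hb : ∀ v, 0 ≤ b v) (hab : ∑ u, a u = ∑ v, b v) : HasChainCoupling a b := by
  induction hN : m + n generalizing m n with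
  | zero =>
    obtain rfl : m = 0 := by lia
    exact of_fin_one hb hab
  | succ N ih =>
    wlog hle : a (Fin.last m) ≤ b (Fin.last n) generalizing m n
    · exact (this hb ha hab.symm (by lia) (le_of_not_ge hle)).symm
    cases m with
    | zero => exact of_fin_one hb hab
    | succ m =>
      refine snoc (ha _) (ih (fun u ↦ ha _) (fun v ↦ ?_) ?_ (by lia))
      · cases v using Fin.lastCases <;> simp [hle, hb]
      · rw [Fin.sum_univ_castSucc] at hab
        simp [← hab]

end HasChainCoupling

end Coupling

section Prism

open CartesianMonoidalCategory

/-- The comparison map from the realization of `Δ[m] ⊗ Δ[n]` to the product of the topological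
simplices, in barycentric coordinates. -/
noncomputable def prodCoordinates (m n : ℕ) (z : |(Δ[m] ⊗ Δ[n] : SSet.{u})|) :
    stdSimplex ℝ (Fin (m + 1)) × stdSimplex ℝ (Fin (n + 1)) :=
  (⦋m⦌.toTopHomeo (SSet.toTop.map (fst _ _) z), ⦋n⦌.toTopHomeo (SSet.toTop.map (snd _ _) z))

variable {k m n : ℕ}

theorem prodCoordinates_simplexPoint (x : (Δ[m] ⊗ Δ[n] : SSet.{u}) _⦋k⦌)
    (p : stdSimplex ℝ (Fin (k + 1))) :
    prodCoordinates m n (simplexPoint x p) = (stdSimplex.map x.1 p, stdSimplex.map x.2 p) := by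
  rw [prodCoordinates, toTop_map_simplexPoint, toTop_map_simplexPoint]
  exact Prod.ext (toTopHomeo_simplexPoint _ _) (toTopHomeo_simplexPoint _ _)

theorem continuous_prodCoordinates : Continuous (prodCoordinates.{u} m n) := by
  unfold prodCoordinates
  fun_prop

theorem prodCoordinates_injective : (prodCoordinates.{u} m n).Injective := by
  intro z w h
  obtain ⟨k, ⟨x, hx⟩, p, hp, rfl⟩ := exists_nonDegenerate_simplexPoint_eq z
  obtain ⟨l, ⟨y, hy⟩, q, hq, rfl⟩ := exists_nonDegenerate_simplexPoint_eq w
  rw [SSet.prodStdSimplex.nonDegenerate_iff_strictMono_objEquiv] at hx hy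
  rw [prodCoordinates_simplexPoint, prodCoordinates_simplexPoint, Prod.mk.injEq] at h
  have hmap : stdSimplex.map (SSet.prodStdSimplex.objEquiv x) p =
      stdSimplex.map (SSet.prodStdSimplex.objEquiv y) q :=
    stdSimplex_map_eq_of_map_fst_eq_of_map_snd_eq h.1 h.2
  have hrange : Set.range (SSet.prodStdSimplex.objEquiv x) =
      Set.range (SSet.prodStdSimplex.objEquiv y) := by
    ext b
    rw [← stdSimplex_map_ne_zero_iff hp, hmap, stdSimplex_map_ne_zero_iff hq]
  obtain rfl : k = l := by
    have h := congrArg Set.ncard hrange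
    rw [← Set.image_univ, ← Set.image_univ, Set.ncard_image_of_injective _ hx.injective,
      Set.ncard_image_of_injective _ hy.injective] at h
    simpa using h
  obtain rfl : x = y :=
    SSet.prodStdSimplex.objEquiv.injective (DFunLike.coe_injective ((hx.range_inj hy).1 hrange))
  rw [stdSimplex_map_injective hx.injective hmap]

theorem prodCoordinates_surjective : (prodCoordinates.{u} m n).Surjective := by
  rintro ⟨a, b⟩
  obtain ⟨k, f, p, hp, ha, hb⟩ := HasChainCoupling.of_sum_eq a.2.1 b.2.1 (a.2.2.trans b.2.2.symm)
  have hsum : ∑ i, p i = 1 := by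
    rw [← stdSimplex.sum_eq_one a, ← Finset.sum_fiberwise Finset.univ (fun i ↦ (f i).1)]
    exact Finset.sum_congr rfl fun u _ ↦ ha u
  refine ⟨simplexPoint (SSet.prodStdSimplex.objEquiv.symm f) ⟨p, hp, hsum⟩, ?_⟩
  rw [prodCoordinates_simplexPoint]
  refine Prod.ext (stdSimplex.ext (funext fun u ↦ ?_)) (stdSimplex.ext (funext fun v ↦ ?_))
  · exact (stdSimplex_map_apply _ _ _).trans (ha u)
  · exact (stdSimplex_map_apply _ _ _).trans (hb v)

variable (m n) in
/-- The comparison map `prodCoordinates` as a homeomorphism. -/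
noncomputable def prodStdSimplexHomeo : |(Δ[m] ⊗ Δ[n] : SSet.{u})| ≃ₜ
    stdSimplex ℝ (Fin (m + 1)) × stdSimplex ℝ (Fin (n + 1)) :=
  continuous_prodCoordinates.homeoOfEquivCompactToT2
    (f := .ofBijective _ ⟨prodCoordinates_injective, prodCoordinates_surjective⟩)

theorem prodCoordinates_map_whiskerRight (θ : ⦋k⦌ ⟶ ⦋m⦌) (z : |(Δ[k] ⊗ Δ[n] : SSet.{u})|) :
    prodCoordinates m n (SSet.toTop.map (SSet.stdSimplex.map θ ▷ Δ[n]) z) =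
      (stdSimplex.map θ (prodCoordinates k n z).1, (prodCoordinates k n z).2) := by
  obtain ⟨l, x, p, rfl⟩ := exists_simplexPoint_eq z
  rw [toTop_map_simplexPoint, prodCoordinates_simplexPoint, prodCoordinates_simplexPoint]
  refine Prod.ext ?_ ?_
  · exact (stdSimplex.map_comp_apply x.1 θ p).symm
  · rfl

theorem prodCoordinates_map_ι₀ (z : |(Δ[m] : SSet.{u})|) :
    prodCoordinates m 1 (SSet.toTop.map SSet.ι₀ z) = (⦋m⦌.toTopHomeo z, stdSimplex.vertex 0) := by
  obtain ⟨n, x, p, rfl⟩ := exists_simplexPoint_eq z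
  rw [toTop_map_simplexPoint, prodCoordinates_simplexPoint, toTopHomeo_simplexPoint]
  exact Prod.ext rfl (stdSimplex_map_const 0 p)

theorem prodCoordinates_map_ι₁ (z : |(Δ[m] : SSet.{u})|) :
    prodCoordinates m 1 (SSet.toTop.map SSet.ι₁ z) = (⦋m⦌.toTopHomeo z, stdSimplex.vertex 1) := by
  obtain ⟨n, x, p, rfl⟩ := exists_simplexPoint_eq z
  rw [toTop_map_simplexPoint, prodCoordinates_simplexPoint, toTopHomeo_simplexPoint]
  exact Prod.ext rfl (stdSimplex_map_const 1 p)

end Prism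

section Homotopy

variable {X Y : SSet.{u}}

theorem exists_toTop_hom {Z : TopCat.{u}}
    (φ : ∀ {n : ℕ}, X _⦋n⦌ → C(stdSimplex ℝ (Fin (n + 1)), Z))
    (hφ : ∀ {m n : ℕ} (θ : ⦋m⦌ ⟶ ⦋n⦌) (x : X _⦋n⦌) (p : stdSimplex ℝ (Fin (m + 1))),
      φ (X.map θ.op x) p = φ x (stdSimplex.map θ p)) :
    ∃ f : |X| ⟶ Z, ∀ {n : ℕ} (x : X _⦋n⦌) (p : stdSimplex ℝ (Fin (n + 1))),
      f (simplexPoint x p) = φ x p := by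
  let Φ : X ⟶ TopCat.toSSet.obj Z :=
    { app n := ↾fun x ↦ (TopCat.toSSetObjEquiv Z n).symm (φ x)
      naturality m n θ := by
        ext x
        refine (TopCat.toSSetObjEquiv Z n).injective (ContinuousMap.ext fun p ↦ ?_)
        exact hφ θ.unop x p }
  refine ⟨(sSetTopAdj.homEquiv X Z).symm Φ, fun x p ↦ ?_⟩
  rw [← toSSetObjEquiv_homEquiv_apply, Equiv.apply_symm_apply]
  rfl

/-- The characteristic map of the prism on the simplex `x` in the cylinder `X ⊗ Δ[1]`. -/
noncomputable def prismMap {n : ℕ} (x : X _⦋n⦌) :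
    C(stdSimplex ℝ (Fin (n + 1)) × stdSimplex ℝ (Fin 2), |X ⊗ Δ[1]|) :=
  (SSet.toTop.map (SSet.yonedaEquiv.symm x ▷ Δ[1])).hom.comp (prodStdSimplexHomeo n 1).symm

theorem prismMap_eq_of_prodCoordinates_eq {n : ℕ} (x : X _⦋n⦌) {z : |(Δ[n] ⊗ Δ[1] : SSet.{u})|}
    {w : stdSimplex ℝ (Fin (n + 1)) × stdSimplex ℝ (Fin 2)} (h : prodCoordinates n 1 z = w) :
    prismMap x w = SSet.toTop.map (SSet.yonedaEquiv.symm x ▷ Δ[1]) z :=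
  congrArg _ ((prodStdSimplexHomeo n 1).symm_apply_eq.2 h.symm)

theorem prismMap_map {m n : ℕ} (θ : ⦋m⦌ ⟶ ⦋n⦌) (x : X _⦋n⦌) (p : stdSimplex ℝ (Fin (m + 1)))
    (t : stdSimplex ℝ (Fin 2)) :
    prismMap (X.map θ.op x) (p, t) = prismMap x (stdSimplex.map θ p, t) := by
  obtain ⟨z, hz⟩ := prodCoordinates_surjective.{u} (p, t)
  have hθz : prodCoordinates n 1 (SSet.toTop.map (SSet.stdSimplex.map θ ▷ Δ[1]) z) =
      (stdSimplex.map θ p, t) := by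
    rw [prodCoordinates_map_whiskerRight, hz]
  rw [prismMap_eq_of_prodCoordinates_eq _ hz, prismMap_eq_of_prodCoordinates_eq x hθz,
    ← SSet.yonedaEquiv_symm_naturality_left, comp_whiskerRight, Functor.map_comp]
  rfl

theorem prismMap_vertex_zero {n : ℕ} (x : X _⦋n⦌) (p : stdSimplex ℝ (Fin (n + 1))) :
    prismMap x (p, stdSimplex.vertex 0) = SSet.toTop.map SSet.ι₀ (simplexPoint x p) := by
  have h := prodCoordinates_map_ι₀.{u} (⦋n⦌.toTopHomeo.symm p)
  rw [Homeomorph.apply_symm_apply] at h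
  rw [prismMap_eq_of_prodCoordinates_eq x h, simplexPoint, ← ConcreteCategory.comp_apply,
    ← ConcreteCategory.comp_apply, ← Functor.map_comp, ← Functor.map_comp, SSet.ι₀_comp]

theorem prismMap_vertex_one {n : ℕ} (x : X _⦋n⦌) (p : stdSimplex ℝ (Fin (n + 1))) :
    prismMap x (p, stdSimplex.vertex 1) = SSet.toTop.map SSet.ι₁ (simplexPoint x p) := by
  have h := prodCoordinates_map_ι₁.{u} (⦋n⦌.toTopHomeo.symm p)
  rw [Homeomorph.apply_symm_apply] at h
  rw [prismMap_eq_of_prodCoordinates_eq x h, simplexPoint, ← ConcreteCategory.comp_apply,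
    ← ConcreteCategory.comp_apply, ← Functor.map_comp, ← Functor.map_comp, SSet.ι₁_comp]

theorem exists_cylinderMap (X : SSet.{u}) : ∃ F : C(|X| × stdSimplex ℝ (Fin 2), |X ⊗ Δ[1]|),
    ∀ z, F (z, stdSimplex.vertex 0) = SSet.toTop.map SSet.ι₀ z ∧
      F (z, stdSimplex.vertex 1) = SSet.toTop.map SSet.ι₁ z := by
  obtain ⟨F, hF⟩ := exists_toTop_hom (X := X)
    (Z := TopCat.of C(stdSimplex ℝ (Fin 2), |X ⊗ Δ[1]|)) (fun x ↦ (prismMap x).curry)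
    fun θ x p ↦ ContinuousMap.ext fun t ↦ prismMap_map θ x p t
  refine ⟨F.hom.uncurry, fun z ↦ ?_⟩
  obtain ⟨n, x, p, rfl⟩ := exists_simplexPoint_eq z
  rw [← prismMap_vertex_zero, ← prismMap_vertex_one]
  exact ⟨DFunLike.congr_fun (hF x p) _, DFunLike.congr_fun (hF x p) _⟩

theorem homotopic_toTop_map_of_homotopy {f g : X ⟶ Y} (H : SSet.Homotopy f g) :
    (SSet.toTop.map f).hom.Homotopic (SSet.toTop.map g).hom := by
  obtain ⟨F, hF⟩ := exists_cylinderMap X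
  have hH (z : |X|) : SSet.toTop.map H.h (SSet.toTop.map SSet.ι₀ z) = SSet.toTop.map f z ∧
      SSet.toTop.map H.h (SSet.toTop.map SSet.ι₁ z) = SSet.toTop.map g z := by
    simp_rw [← ConcreteCategory.comp_apply, ← Functor.map_comp, H.h₀, H.h₁, and_self]
  let e : C(unitInterval, stdSimplex ℝ (Fin 2)) := stdSimplexHomeomorphUnitInterval.symm
  refine ⟨⟨(SSet.toTop.map H.h).hom.comp (F.comp (.prodMk .snd (e.comp .fst))),
    fun z ↦ ?_, fun z ↦ ?_⟩⟩
  · have : e 0 = stdSimplex.vertex 0 := stdSimplexHomeomorphUnitInterval.symm_apply_eq.2 rfl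
    simpa [this, (hF z).1] using (hH z).1
  · have : e 1 = stdSimplex.vertex 1 := stdSimplexHomeomorphUnitInterval.symm_apply_eq.2 rfl
    simpa [this, (hF z).2] using (hH z).2

theorem toTop_map_const_apply (y : Y _⦋0⦌) (z : |X|) :
    SSet.toTop.map (SSet.const y : X ⟶ Y) z = simplexPoint y default := by
  obtain ⟨n, x, p, rfl⟩ := exists_simplexPoint_eq z
  rw [toTop_map_simplexPoint]
  exact (simplexPoint_map _ _ _).trans
    (congrArg _ (Subsingleton.elim (α := stdSimplex ℝ (Fin 1)) _ _))

theorem contractibleSpace_toTop_obj_of_homotopic_const {y : X _⦋0⦌}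
    (h : (SSet.toTop.map (𝟙 X)).hom.Homotopic (SSet.toTop.map (SSet.const y)).hom) :
    ContractibleSpace |X| := by
  rw [SSet.toTop.map_id, (ContinuousMap.ext (toTop_map_const_apply y) :
    (SSet.toTop.map (SSet.const y : X ⟶ X)).hom = .const _ (simplexPoint y default))] at h
  exact (contractible_iff_id_nullhomotopic _).2 ⟨_, h⟩

end Homotopy

section Nerve

theorem sectR_comp_uncurry_obj {A B C : Type*} [Category* A] [Category* B] [Category* C]
    (F : A ⥤ B ⥤ C) (a : A) : Prod.sectR a B ⋙ Functor.uncurry.obj F = F.obj a :=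
  CategoryTheory.Functor.ext (fun _ ↦ rfl) fun x y f ↦ by
    change (F.map (𝟙 a)).app x ≫ (F.obj a).map f = 𝟙 _ ≫ (F.obj a).map f ≫ 𝟙 _
    simp

variable {C D : Type u} [Category.{v} C] [Category.{v} D] {F G : C ⥤ D}

/-- The simplicial homotopy `nerve C ⊗ Δ[1] ⟶ nerve D` induced by a natural transformation, the
latter being regarded as a functor `Fin 2 × C ⥤ D`. -/
def nerveHomotopy (α : F ⟶ G) : SSet.Homotopy (nerveMap F) (nerveMap G) where
  h := { app _ := ↾fun x ↦ (SSet.stdSimplex.monotone_apply x.2).functor.prod' x.1 ⋙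
          Functor.uncurry.obj (ComposableArrows.mk₁ α) }
  h₀ := congrArg nerveMap (sectR_comp_uncurry_obj (ComposableArrows.mk₁ α) 0)
  h₁ := congrArg nerveMap (sectR_comp_uncurry_obj (ComposableArrows.mk₁ α) 1)
  rel := by
    ext n x
    exact x.1.2.elim

theorem homotopic_toTop_map_nerveMap (α : F ⟶ G) :
    (SSet.toTop.map (nerveMap F)).hom.Homotopic (SSet.toTop.map (nerveMap G)).hom :=
  homotopic_toTop_map_of_homotopy (nerveHomotopy α)

end Nerve

section Coproduct

variable {C : Type u} [Category.{v} C] (c : C)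

/-- The functor `x ↦ c ⨿ x`, for an object `c` that has a coproduct with every object. -/
noncomputable def coprodWith [∀ x, HasBinaryCoproduct c x] : C ⥤ C where
  obj x := c ⨿ x
  map f := coprod.map (𝟙 c) f

/-- The functor `x ↦ c ⨯ x`, for an object `c` that has a product with every object. -/
noncomputable def prodWith [∀ x, HasBinaryProduct c x] : C ⥤ C where
  obj x := c ⨯ x
  map f := prod.map (𝟙 c) f

theorem contractible_of_pairwise_coproducts_or_products_general
    (h : (∀ x, HasBinaryCoproduct c x) ∨ ∀ x, HasBinaryProduct c x) :
    ContractibleSpace (SSet.toTop.obj (nerve C)) := by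
  suffices (SSet.toTop.map (nerveMap (𝟭 C))).hom.Homotopic
      (SSet.toTop.map (nerveMap ((Functor.const C).obj c))).hom from
    contractibleSpace_toTop_obj_of_homotopic_const (y := ComposableArrows.mk₀ c) this
  obtain h | h := h
  · let inl : (Functor.const C).obj c ⟶ coprodWith c :=
      { app x := (coprod.inl : c ⟶ c ⨿ x), naturality _ _ f := (coprod.inl_map (𝟙 c) f).symm }
    let inr : 𝟭 C ⟶ coprodWith c :=
      { app x := coprod.inr, naturality _ _ f := (coprod.inr_map (𝟙 c) f).symm }
    exact (homotopic_toTop_map_nerveMap inr).trans (homotopic_toTop_map_nerveMap inl).symm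
  · let fst : prodWith c ⟶ (Functor.const C).obj c :=
      { app x := prod.fst, naturality _ _ f := prod.map_fst (𝟙 c) f }
    let snd : prodWith c ⟶ 𝟭 C :=
      { app x := prod.snd, naturality _ _ f := prod.map_snd (𝟙 c) f }
    exact (homotopic_toTop_map_nerveMap snd).symm.trans (homotopic_toTop_map_nerveMap fst)

end Coproduct

end

/-- A (nonempty) small category with pairwise coproducts is contractible,
i.e. its classifying space `B𝒞 = |N𝒞|` is a contractible topological space; dually, a
(nonempty) small category with pairwise products is contractible.
(Nonemptiness is implicit in the paper, which chooses an object `c₀ ∈ 𝒞`.) -/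
theorem contractible_of_pairwise_coproducts_or_products
    (C : Type) [SmallCategory C] [Nonempty C]
    (h : HasBinaryCoproducts C ∨ HasBinaryProducts C) :
    ContractibleSpace (SSet.toTop.obj (nerve C)) :=
  contractible_of_pairwise_coproducts_or_products_general (Classical.arbitrary C)
    (h.imp (fun (_ : HasBinaryCoproducts C) _ ↦ inferInstance)
      fun (_ : HasBinaryProducts C) _ ↦ inferInstance)
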